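/- Let k be a field of characteristic zero and let U_n denote the restriction of the Tchebyshev transform of the second kind U to the 2^n-dimensional space k⟨a,b⟩_n of homogeneous ab-polynomials of degree n. Then U_n is diagonalizable, and its eigenvalues are exactly 2^{i+1} for 0 ≤ i ≤ n, with the eigenvalue 2^{i+1} occurring with multiplicity binomial(n, i). -/

import Mathlib

open scoped TensorProduct

noncomputable section

namespace Tcheb

/-! ### The algebra `R⟨a,b⟩` of ab-polynomials -/

/-- Words in the two noncommuting letters `a` (encoded `true`) and `b` (encoded `false`). -/
abbrev ABWord : Type := FreeMonoid Bool

/-- The ring `R⟨a,b⟩` of polynomials in two noncommuting variables `a` and `b`. -/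
abbrev AB (R : Type) [CommRing R] : Type := MonoidAlgebra R ABWord

variable (R : Type) [CommRing R]

/-- The ab-monomial corresponding to a word. -/
def word (l : List Bool) : AB R := MonoidAlgebra.of R ABWord (FreeMonoid.ofList l)

/-- The variable `a`. -/
def av : AB R := word R [true]
/-- The variable `b`. -/
def bv : AB R := word R [false]
/-- `c = a + b`. -/
def cv : AB R := av R + bv R
/-- `d = ab + ba`. -/
def dv : AB R := av R * bv R + bv R * av R
/-- `a - b`. -/
def ev : AB R := av R - bv R

/-- The linear map defined by prescribing values on the basis of ab-monomials. -/
def onBasis {M : Type} [AddCommMonoid M] [Module R M] (f : List Bool → M) :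
    AB R →ₗ[R] M :=
  (Finsupp.lift M R ABWord fun w => f (FreeMonoid.toList w)) ∘ₗ
    (MonoidAlgebra.coeffLinearEquiv R).toLinearMap

/-- The algebra map `A` with `A(a) = 1`, `A(b) = 0`. -/
def Amap : AB R →ₐ[R] R :=
  MonoidAlgebra.lift R R ABWord (FreeMonoid.lift fun x => if x then (1 : R) else 0)

/-- The coproduct on `R⟨a,b⟩`: on an ab-monomial `u₁ ⋯ u_k` it is
`Σ_{i=1}^k u₁ ⋯ u_{i-1} ⊗ u_{i+1} ⋯ u_k`. -/
def Delta : AB R →ₗ[R] AB R ⊗[R] AB R :=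
  onBasis R fun w => ∑ i ∈ Finset.range w.length,
    word R (w.take i) ⊗ₜ[R] word R (w.drop (i + 1))

/-- The linear map `C(u) = 2·A(u) + Σ_u A(u₍₁₎)·A(u₍₂₎)`. -/
def Cmap : AB R →ₗ[R] R :=
  2 • (Amap R).toLinearMap +
    (LinearMap.mul' R R ∘ₗ
      TensorProduct.map (Amap R).toLinearMap (Amap R).toLinearMap) ∘ₗ Delta R

/-- `κ(u) = A(u)·(a-b)^(deg u)` on homogeneous `u`, extended linearly. -/
def kappa : AB R →ₗ[R] AB R :=
  onBasis R fun w => Amap R (word R w) • ev R ^ w.length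

/-- `ν(u) = C(u)·(a-b)^(deg u)` on homogeneous `u`, extended linearly. -/
def nuMap : AB R →ₗ[R] AB R :=
  onBasis R fun w => Cmap R (word R w) • ev R ^ w.length

end Tcheb

namespace Tcheb

/-- Cutting a word into the list of segments between the (sorted) cut positions. -/
def segments : List Bool → List ℕ → List (List Bool)
  | l, [] => [l]
  | l, i :: rest => l.take i :: segments (l.drop (i + 1)) (rest.map fun j => j - (i + 1))
  termination_by _ cuts => cuts.length
  decreasing_by simp

variable (R : Type) [CommRing R]

/-- For segments `[s₁, …, s_k]` this is `ν(s₁)·b·ν(s₂)·b ⋯ b·ν(s_{k-1})·b·κ(s_k)`. -/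
def chainProd : List (List Bool) → AB R
  | [] => 1
  | [s] => kappa R (word R s)
  | s :: rest => nuMap R (word R s) * bv R * chainProd rest

/-- The Tchebyshev transform (of the first kind) on ab-polynomials:
`T(u) = Σ_{k ≥ 1} Σ_u ν(u₍₁₎)·b·ν(u₍₂₎)·b ⋯ b·ν(u₍ₖ₋₁₎)·b·κ(u₍ₖ₎)`,
where the inner sum is over the `k`-fold coproduct.  On the ab-monomial basis this
is the sum, over all sets of positions of deleted letters, of the corresponding
products over the resulting segments. -/
def Tmap : AB R →ₗ[R] AB R :=
  onBasis R fun w => ∑ S : Finset (Fin w.length),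
    chainProd R (segments w ((S.sort (· ≤ ·)).map Fin.val))

/-- The `ω` map on a word: replace each occurrence of `ab` by `2d` and all
remaining letters by `c`. -/
def omegaWord : List Bool → AB R
  | [] => 1
  | true :: false :: rest => (2 * dv R) * omegaWord rest
  | _ :: rest => cv R * omegaWord rest

/-- The `ω` map of Billera–Ehrenborg–Readdy. -/
def omegaMap : AB R →ₗ[R] AB R := onBasis R fun w => omegaWord R w

/-- The reversal involution `u ↦ u*` of ab-polynomials. -/
def revMap : AB R →ₗ[R] AB R := onBasis R fun w => word R w.reverse

/-- `H*(1) = 0` and `H*(u·a) = H*(u·b) = u`. -/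
def Hstar : AB R →ₗ[R] AB R :=
  onBasis R fun w => if w = [] then 0 else word R w.dropLast

/-- The Tchebyshev transform of the second kind `U(u) = H*(T(u·a))`. -/
def Umap : AB R →ₗ[R] AB R := Hstar R ∘ₗ Tmap R ∘ₗ LinearMap.mulRight R (av R)

/-- `σ(u) = Σ_u κ(u₍₁₎)·b·T(u₍₂₎)`. -/
def sigmaMap : AB R →ₗ[R] AB R :=
  LinearMap.mul' R (AB R) ∘ₗ
    TensorProduct.map (LinearMap.mulRight R (bv R) ∘ₗ kappa R) (Tmap R) ∘ₗ Delta R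

/-! ### Graded posets and the ab-index -/

/-- `rk` is a rank function for a bounded poset: `rk ⊥ = 0` and covers raise rank by one. -/
def IsRankFun (α : Type) [PartialOrder α] [OrderBot α] (rk : α → ℕ) : Prop :=
  rk ⊥ = 0 ∧ ∀ x y : α, x ⋖ y → rk y = rk x + 1

/-- `f` lists the elements of a chain in increasing order with respect to the
strict order relation `lt`. -/
def IsStrictChain {α : Type} (lt : α → α → Prop) {n : ℕ} (f : Fin (n + 1) → α) : Prop :=
  ∀ i j : Fin (n + 1), i < j → lt (f i) (f j)

/-- The weight of a chain `x₀ < x₁ < ⋯ < x_k`: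
`(a-b)^{ρ(x₀,x₁)-1}·b·(a-b)^{ρ(x₁,x₂)-1}·b ⋯ b·(a-b)^{ρ(x_{k-1},x_k)-1}`. -/
def chainWt {α : Type} (rk : α → ℕ) {n : ℕ} (f : Fin (n + 1) → α) : AB R :=
  (List.intersperse (bv R)
    (List.ofFn fun i : Fin n => ev R ^ (rk (f i.succ) - rk (f i.castSucc) - 1))).prod

/-- The ab-index `Ψ` of the graded poset with strict order relation `lt`, rank
function `rk`, minimum `b` and maximum `t`: the sum of the weights of all chains
from `b` to `t`. -/
def PsiRel {α : Type} (lt : α → α → Prop) (rk : α → ℕ) (b t : α) : AB R :=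
  ∑ᶠ (n : ℕ), ∑ᶠ (f : Fin (n + 1) → α)
    (_ : IsStrictChain lt f ∧ f 0 = b ∧ f (Fin.last n) = t), chainWt R rk f

end Tcheb

namespace Tcheb

/-! ### The Tchebyshev transform of a graded poset -/

section TPoset

variable (α : Type) [PartialOrder α] [BoundedOrder α]

/-- The elements `[x,y]` of the Tchebyshev transform: intervals of `P ∪ {-1̂}`,
i.e. pairs `(x,y)` with `x ∈ P ∪ {-1̂}`, `y ∈ P` and `x < y`. -/
def TPel : Type := {p : WithBot α × α // p.1 < (p.2 : WithBot α)}

/-- The underlying set of the Tchebyshev transform `T(P)`: the intervals `[x,y]`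
together with a new maximum element (`none`). -/
def TP : Type := Option (TPel α)

/-- The cover relation of the Tchebyshev transform `T(P)`:
`[x,y] ⋖ [y,w]` and `[x,y] ⋖ [x,w]` whenever `y ⋖ w` in `P`, and `[x,1̂] ⋖ 1̂_{T(P)}`. -/
inductive TPcov : TP α → TP α → Prop
  | up {x : WithBot α} {y w : α} (h1 : x < (y : WithBot α))
      (h2 : (y : WithBot α) < (w : WithBot α)) (hc : y ⋖ w) :
      TPcov (some ⟨(x, y), h1⟩) (some ⟨((y : WithBot α), w), h2⟩)
  | same {x : WithBot α} {y w : α} (h1 : x < (y : WithBot α))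
      (h2 : x < (w : WithBot α)) (hc : y ⋖ w) :
      TPcov (some ⟨(x, y), h1⟩) (some ⟨(x, w), h2⟩)
  | top {x : WithBot α} (h1 : x < ((⊤ : α) : WithBot α)) :
      TPcov (some ⟨(x, (⊤ : α)), h1⟩) none

/-- The strict order relation of `T(P)`, generated by the cover relation. -/
def TPlt : TP α → TP α → Prop := Relation.TransGen (TPcov α)

/-- The order relation of `T(P)`, generated by the cover relation. -/
def TPle : TP α → TP α → Prop := Relation.ReflTransGen (TPcov α)

/-- The minimum element `[-1̂, 0̂]` of `T(P)`. -/
def TPbot : TP α := some ⟨((⊥ : WithBot α), (⊥ : α)), WithBot.bot_lt_coe _⟩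

/-- The maximum element `1̂_{T(P)}` of `T(P)`. -/
def TPtop : TP α := none

/-- The rank function of `T(P)`: `ρ([x,y]) = ρ(y)` and `ρ(1̂_{T(P)}) = ρ(P) + 1`. -/
def TPrk (rk : α → ℕ) : TP α → ℕ
  | some p => rk p.1.2
  | none => rk (⊤ : α) + 1

theorem TPbot_ne_TPtop : TPbot α ≠ TPtop α := by exact Option.some_ne_none _

/-- The map `z : T(P) → P ∪ {2̂}` with `z([x,y]) = y` and `z(1̂_{T(P)}) = 2̂`. -/
def zmap : TP α → WithTop α
  | some p => (p.1.2 : WithTop α)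
  | none => ⊤

/-- The number of elements of the interval `[u,v]` of `P`, for `u, v ∈ P ∪ {2̂}`. -/
def intervalCard (u v : WithTop α) : ℕ :=
  Set.ncard {t : α | u ≤ (t : WithTop α) ∧ (t : WithTop α) ≤ v}

end TPoset

/-! ### The dual diamond product -/

/-- The strict order relation of the dual diamond product
`P ◇* Q = ((P ∖ {1̂}) × (Q ∖ {1̂})) ∪ {1̂}` (with `none` the new maximum), built from
the order relations `leA, ltA` and `leB, ltB` of the two factors. -/
def dsLT {A B : Type} (leA ltA : A → A → Prop) (leB ltB : B → B → Prop) :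
    Option (A × B) → Option (A × B) → Prop
  | some p, some q => (leA p.1 q.1 ∧ leB p.2 q.2) ∧ (ltA p.1 q.1 ∨ ltB p.2 q.2)
  | some _, none => True
  | none, _ => False

/-! ### EL-labelings -/

/-- The list of edge labels along a chain (given as a list of poset elements). -/
def labelsList {α Λ : Type} (lam : α → α → Λ) (l : List α) : List Λ :=
  (l.zip l.tail).map fun p => lam p.1 p.2

/-- `l` is a maximal (saturated) chain of the interval `[x,y]` with respect to the
cover relation `cov`: it runs from `x` to `y` and every step is a cover. -/
def IsMaxChainList {α : Type} (cov : α → α → Prop) (x y : α) (l : List α) : Prop :=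
  l.head? = some x ∧ l.getLast? = some y ∧ l.Chain' cov

/-- An `EL`-labeling of the poset whose cover relation is `cov`, with labels in the
linearly ordered set `(Λ, lle, llt)`: every interval has a unique rising maximal
chain, which moreover is lexicographically least among all maximal chains of the
interval. -/
def IsELLabeling (α Λ : Type) (lle llt : Λ → Λ → Prop)
    (cov : α → α → Prop) (lam : α → α → Λ) : Prop :=
  ∀ x y : α, Relation.ReflTransGen cov x y →
    ∃ l : List α, (IsMaxChainList cov x y l ∧ (labelsList lam l).Chain' lle) ∧
      (∀ l' : List α, IsMaxChainList cov x y l' →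
        (labelsList lam l').Chain' lle → l' = l) ∧
      (∀ l' : List α, IsMaxChainList cov x y l' →
        labelsList lam l = labelsList lam l' ∨
          List.Lex llt (labelsList lam l) (labelsList lam l'))

/-! ### Eulerian posets -/

/-- A graded poset is Eulerian if every nontrivial interval `[x,y]` has the
same number of elements of even rank as of odd rank. -/
def IsEulerian (α : Type) [PartialOrder α] (rk : α → ℕ) : Prop :=
  ∀ x y : α, x < y →
    Set.ncard {z : α | x ≤ z ∧ z ≤ y ∧ Even (rk z)} =
      Set.ncard {z : α | x ≤ z ∧ z ≤ y ∧ ¬ Even (rk z)}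

/-! ### The face lattice of the crosspolytope -/

/-- A face of the `n`-dimensional crosspolytope: a partial sign vector, i.e. the
pair `(S, ε)` of a subset `S ⊆ {1,…,n}` (the set of coordinates where the function
takes a value `some`) together with a sign function `ε` on `S`. -/
def CrossEl (n : ℕ) : Type := Fin n → Option Bool

/-- `(S,ε) ≤ (T,δ)` iff `S ⊆ T` and `δ` restricted to `S` is `ε`. -/
instance (n : ℕ) : PartialOrder (CrossEl n) where
  le f g := ∀ i s, f i = some s → g i = some s
  le_refl f i s h := h
  le_trans f g h fg gh i s hi := gh i s (fg i s hi)
  le_antisymm f g fg gf := by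
    funext i
    cases hf : f i with
    | some s => exact (fg i s hf).symm
    | none =>
      cases hg : g i with
      | some s => exact absurd (gf i s hg) (by simp [hf])
      | none => rfl

/-- The face lattice of the `n`-dimensional crosspolytope: all partial sign
vectors together with a new maximum element. -/
abbrev Cross (n : ℕ) : Type := WithTop (CrossEl n)

/-- The rank function of the face lattice of the crosspolytope:
`ρ(S,ε) = |S|` and the maximum has rank `n + 1`. -/
def crossRk (n : ℕ) : Cross n → ℕ
  | none => n + 1
  | some f => (Finset.univ.filter fun i : Fin n => (f i).isSome).card

/-- The minimal element (the empty face) of the crosspolytope face lattice. -/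
def crossBot (n : ℕ) : Cross n := WithTop.some (fun _ => none)

/-- The maximal element of the crosspolytope face lattice. -/
def crossTop (n : ℕ) : Cross n := ⊤

/-! ### Quasisymmetric functions -/

/-- The monomial quasisymmetric function `M_{(p₁,…,p_k)}`, as a formal power
series in the countably many commuting variables `t₁, t₂, …` (indexed by `ℕ`). -/
def MQ (R : Type) [CommRing R] (ps : List ℕ) : MvPowerSeries ℕ R :=
  fun m => if ((m.support.sort (· ≤ ·)).map fun i => m i) = ps then 1 else 0

/-- The `t`-part of a monomial in the variables `s` (index `none`) and
`t₁, t₂, …` (indices `some i`). -/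
def tpart (m : Option ℕ →₀ ℕ) : ℕ →₀ ℕ :=
  Finsupp.comapDomain some m (Option.some_injective ℕ).injOn

/-- The type B monomial quasisymmetric function `s^p · M_{(p₁,…,p_k)}`, a formal
power series in the variables `s` (index `none`) and `t₁, t₂, …` (indices `some i`). -/
def MB (R : Type) [CommRing R] (p : ℕ) (ps : List ℕ) : MvPowerSeries (Option ℕ) R :=
  fun m => if m none = p ∧
      (((tpart m).support.sort (· ≤ ·)).map fun i => tpart m i) = ps then 1 else 0

/-- The quasisymmetric function `F(P)` of the graded poset with strict order
relation `lt`, rank function `rk`, minimum `b` and maximum `t`: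
`F(P) = Σ_c M_{(ρ(x₀,x₁),…,ρ(x_{k-1},x_k))}` over all chains `c` from `b` to `t`. -/
def FQ (R : Type) [CommRing R] {α : Type} (lt : α → α → Prop) (rk : α → ℕ)
    (b t : α) : MvPowerSeries ℕ R :=
  ∑ᶠ (n : ℕ), ∑ᶠ (f : Fin (n + 1) → α)
    (_ : IsStrictChain lt f ∧ f 0 = b ∧ f (Fin.last n) = t),
    MQ R (List.ofFn fun i : Fin n => rk (f i.succ) - rk (f i.castSucc))

/-- The type B quasisymmetric function `F_B(P) = Σ_{0̂ < x ≤ 1̂} s^{ρ(x)-1}·F([x,1̂])`,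
written as a sum over all chains `0̂ < x₀ < x₁ < ⋯ < x_k = 1̂` of
`s^{ρ(x₀)-1}·M_{(ρ(x₀,x₁),…,ρ(x_{k-1},x_k))}`. -/
def FB (R : Type) [CommRing R] {α : Type} (lt : α → α → Prop) (rk : α → ℕ)
    (b t : α) : MvPowerSeries (Option ℕ) R :=
  ∑ᶠ (n : ℕ), ∑ᶠ (f : Fin (n + 1) → α)
    (_ : IsStrictChain lt f ∧ lt b (f 0) ∧ f (Fin.last n) = t),
    MB R (rk (f 0) - 1) (List.ofFn fun i : Fin n => rk (f i.succ) - rk (f i.castSucc))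

/-! ### Characters and the chain maps -/

/-- A character on `k⟨a,b⟩`: a linear functional which is multiplicative with
respect to Cartesian products of graded posets (of rank at least 1). -/
def IsCharacter (k : Type) [Field k] (G : AB k →ₗ[k] k) : Prop :=
  ∀ (α β : Type) [Fintype α] [Fintype β] [PartialOrder α] [PartialOrder β]
    [BoundedOrder α] [BoundedOrder β], ∀ (rkα : α → ℕ) (rkβ : β → ℕ),
    IsRankFun α rkα → IsRankFun β rkβ → 1 ≤ rkα ⊤ → 1 ≤ rkβ ⊤ →
    G (PsiRel k (· < ·) (fun p : α × β => rkα p.1 + rkβ p.2)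
        ((⊥ : α), (⊥ : β)) ((⊤ : α), (⊤ : β))) =
      G (PsiRel k (· < ·) rkα ⊥ ⊤) * G (PsiRel k (· < ·) rkβ ⊥ ⊤)

/-- The quasisymmetric function image `g̃F(P)` of the chain map of the second kind:
`Σ_c G(Ψ([x₀,x₁])) ⋯ G(Ψ([x_{k-1},x_k])) · M_{(ρ(x₀,x₁),…,ρ(x_{k-1},x_k))}`,
summed over all chains `c = {b = x₀ < ⋯ < x_k = t}`. -/
def gtF (k : Type) [Field k] (G : AB k →ₗ[k] k) {α : Type} (lt : α → α → Prop)
    (rk : α → ℕ) (b t : α) : MvPowerSeries ℕ k :=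
  ∑ᶠ (n : ℕ), ∑ᶠ (f : Fin (n + 1) → α)
    (_ : IsStrictChain lt f ∧ f 0 = b ∧ f (Fin.last n) = t),
    (∏ i : Fin n, G (PsiRel k lt rk (f i.castSucc) (f i.succ))) •
      MQ k (List.ofFn fun i : Fin n => rk (f i.succ) - rk (f i.castSucc))

/-- The type B quasisymmetric function image `gF_B(P) = Σ_{0̂ < x ≤ 1̂}
s^{ρ(x)-1}·g̃F([x,1̂])` of the chain map of the first kind, written as a sum over
all chains `0̂ < x₀ < ⋯ < x_k = 1̂`. -/
def gFB (k : Type) [Field k] (G : AB k →ₗ[k] k) {α : Type} (lt : α → α → Prop)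
    (rk : α → ℕ) (b t : α) : MvPowerSeries (Option ℕ) k :=
  ∑ᶠ (n : ℕ), ∑ᶠ (f : Fin (n + 1) → α)
    (_ : IsStrictChain lt f ∧ lt b (f 0) ∧ f (Fin.last n) = t),
    (∏ i : Fin n, G (PsiRel k lt rk (f i.castSucc) (f i.succ))) •
      MB k (rk (f 0) - 1) (List.ofFn fun i : Fin n => rk (f i.succ) - rk (f i.castSucc))

/-- The space of homogeneous ab-polynomials of degree `n`. -/
def ABhomog (k : Type) [Field k] (n : ℕ) : Submodule k (AB k) :=
  Submodule.span k {x : AB k | ∃ w : List Bool, w.length = n ∧ x = word k w}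

section Helpers

theorem onBasis_word (k : Type) [CommRing k] {M : Type} [AddCommMonoid M] [Module k M]
    (f : List Bool → M) (l : List Bool) : onBasis k f (word k l) = f l := by
  have h : (MonoidAlgebra.coeffLinearEquiv k) (word k l) =
      Finsupp.single (FreeMonoid.ofList l) (1 : k) := rfl
  simp only [onBasis, LinearMap.comp_apply, LinearEquiv.coe_coe, h]
  simp

theorem ext_word (k : Type) [CommRing k] {M : Type} [AddCommMonoid M] [Module k M]
    {f g : AB k →ₗ[k] M} (h : ∀ l, f (word k l) = g (word k l)) : f = g := by
  refine (MonoidAlgebra.basis ABWord k).ext fun w => ?_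
  have := h (FreeMonoid.toList w)
  simpa [word, MonoidAlgebra.basis_apply] using this

theorem word_append (k : Type) [CommRing k] (l m : List Bool) :
    word k (l ++ m) = word k l * word k m := by
  simp only [word, FreeMonoid.ofList_append, map_mul]

theorem word_nil (k : Type) [CommRing k] : word k [] = 1 := by
  simp only [word, FreeMonoid.ofList_nil, map_one]

theorem word_cons (k : Type) [CommRing k] (x : Bool) (l : List Bool) :
    word k (x :: l) = word k [x] * word k l := word_append k [x] l

theorem Delta_cons (k : Type) [CommRing k] (x : Bool) (u : AB k) :
    Delta k (word k [x] * u) = 1 ⊗ₜ[k] u +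
      TensorProduct.map (LinearMap.mulLeft k (word k [x])) LinearMap.id (Delta k u) := by
  have : Delta k ∘ₗ LinearMap.mulLeft k (word k [x]) = TensorProduct.mk k _ _ 1 +
      TensorProduct.map (LinearMap.mulLeft k (word k [x])) LinearMap.id ∘ₗ Delta k := by
    refine ext_word k fun l => ?_
    simp only [LinearMap.comp_apply, LinearMap.mulLeft_apply, LinearMap.add_apply,
      TensorProduct.mk_apply, ← word_cons, Delta, onBasis_word, map_sum, TensorProduct.map_tmul,
      List.length_cons, Finset.sum_range_succ', LinearMap.id_apply]
    simp only [List.take_succ_cons, List.drop_succ_cons, List.take_zero, List.drop_zero, word_nil]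
    rw [add_comm]
  exact LinearMap.congr_fun this u

theorem Delta_one (k : Type) [CommRing k] : Delta k 1 = 0 := by
  rw [← word_nil, Delta, onBasis_word]; simp

theorem Delta_ev (k : Type) [CommRing k] (u : AB k) :
    Delta k (ev k * u) =
      TensorProduct.map (LinearMap.mulLeft k (ev k)) LinearMap.id (Delta k u) := by
  have h : (LinearMap.mulLeft k (ev k)) = LinearMap.mulLeft k (word k [true])
      - LinearMap.mulLeft k (word k [false]) := by
    ext; simp [ev, av, bv, sub_mul]
  have h2 : ∀ f g : AB k →ₗ[k] AB k, TensorProduct.map (f - g) (LinearMap.id (R := k) (M := AB k)) =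
      TensorProduct.map f LinearMap.id - TensorProduct.map g LinearMap.id :=
    fun f g => LinearMap.rTensor_sub f g
  rw [h, h2]
  simp [ev, av, bv, sub_mul, Delta_cons]

/-! Recursion for `T` -/

/-- prepend to the first segment -/
def prep (p : List Bool) : List (List Bool) → List (List Bool)
  | [] => [p]
  | s :: r => (p ++ s) :: r

theorem segments_ne_nil (l : List Bool) (c : List ℕ) : segments l c ≠ [] := by
  cases c <;> simp [segments]

theorem segments_zero (x : Bool) (l : List Bool) (c : List ℕ) :
    segments (x :: l) (0 :: c.map Nat.succ) = [] :: segments l c := by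
  rw [segments]
  simp [Function.comp_def]

theorem segments_succ (x : Bool) (l : List Bool) (c : List ℕ) :
    segments (x :: l) (c.map Nat.succ) = prep [x] (segments l c) := by
  cases c with
  | nil => simp [segments, prep]
  | cons i c =>
    rw [List.map_cons, segments, segments]
    simp [prep, Function.comp_def]

theorem sum_finset_fin_succ {M : Type} [AddCommMonoid M] (n : ℕ) (f : Finset (Fin (n + 1)) → M) :
    ∑ S, f S = ∑ S : Finset (Fin n), f (S.map (Fin.succEmb n)) +
      ∑ S : Finset (Fin n), f (insert 0 (S.map (Fin.succEmb n))) := by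
  classical
  rw [← Finset.powerset_univ, Fin.univ_succ, Finset.cons_eq_insert, Finset.sum_powerset_insert]
  · have h : ((Finset.univ : Finset (Fin n)).map ⟨Fin.succ, Fin.succ_injective n⟩).powerset
        = Finset.univ.map ⟨fun S : Finset (Fin n) => S.map (Fin.succEmb n), Finset.map_injective _⟩ := by
      ext S
      simp only [Finset.mem_powerset, Finset.mem_map, Finset.mem_univ, true_and,
        Function.Embedding.coeFn_mk]
      rw [Finset.subset_map_iff]
      constructor
      · rintro ⟨u, -, rfl⟩; exact ⟨u, rfl⟩
      · rintro ⟨u, rfl⟩; exact ⟨u, Finset.subset_univ _, rfl⟩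
    rw [h, Finset.sum_map, Finset.sum_map]
    rfl
  · simp

theorem sort_succ (n : ℕ) (S : Finset (Fin n)) :
    ((S.map (Fin.succEmb n)).sort (· ≤ ·)).map Fin.val
      = ((S.sort (· ≤ ·)).map Fin.val).map Nat.succ := by
  rw [← Finset.map_sort (Fin.succEmb n) S (· ≤ ·) (· ≤ ·) (by simp)]
  simp [Function.comp_def]

theorem sort_zero_succ (n : ℕ) (S : Finset (Fin n)) :
    ((insert 0 (S.map (Fin.succEmb n))).sort (· ≤ ·)).map Fin.val
      = 0 :: ((S.sort (· ≤ ·)).map Fin.val).map Nat.succ := by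
  rw [Finset.sort_insert _ (by simp) (by simp), List.map_cons, sort_succ]
  rfl

theorem prep_prep (p q : List Bool) (s : List (List Bool)) (hs : s ≠ []) :
    prep p (prep q s) = prep (p ++ q) s := by
  cases s <;> simp_all [prep]

theorem prep_nil (s : List (List Bool)) (hs : s ≠ []) : prep [] s = s := by
  cases s <;> simp_all [prep]

theorem chain_prep_nil (k : Type) [CommRing k] (p : List Bool) (s : List (List Bool))
    (hs : s ≠ []) :
    chainProd k (prep p ([] :: s)) = nuMap k (word k p) * bv k * chainProd k s := by
  cases s with
  | nil => exact absurd rfl hs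
  | cons a s => simp [prep, chainProd]

theorem T_aux (k : Type) [CommRing k] (w : List Bool) : ∀ p : List Bool,
    ∑ S : Finset (Fin w.length),
      chainProd k (prep p (segments w ((S.sort (· ≤ ·)).map Fin.val))) =
    kappa k (word k (p ++ w)) + ∑ i ∈ Finset.range w.length,
      nuMap k (word k (p ++ w.take i)) * bv k * Tmap k (word k (w.drop (i + 1))) := by
  induction w with
  | nil =>
    intro p
    haveI : Subsingleton (Finset (Fin ([] : List Bool).length)) :=
      inferInstanceAs (Subsingleton (Finset (Fin 0)))
    rw [Fintype.sum_subsingleton _ (∅ : Finset (Fin ([] : List Bool).length))]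
    simp [segments, prep, chainProd]
  | cons x w ih =>
    intro p
    rw [List.length_cons, sum_finset_fin_succ, Finset.sum_range_succ']
    simp only [sort_succ, sort_zero_succ, segments_succ, segments_zero,
      prep_prep _ _ _ (segments_ne_nil _ _), chain_prep_nil _ _ _ (segments_ne_nil _ _)]
    rw [ih, ← Finset.mul_sum]
    simp [Tmap, onBasis_word, add_assoc]

/-- `Σ ν(p u₁) b T(u₂)` -/
def Rm (k : Type) [CommRing k] (p : AB k) : AB k →ₗ[k] AB k :=
  LinearMap.mul' k (AB k) ∘ₗ TensorProduct.map
    (LinearMap.mulRight k (bv k) ∘ₗ nuMap k ∘ₗ LinearMap.mulLeft k p) (Tmap k) ∘ₗ Delta k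

theorem T_eq (k : Type) [CommRing k] (u : AB k) : Tmap k u = kappa k u + Rm k 1 u := by
  have : Tmap k = kappa k + Rm k 1 := by
    refine ext_word k fun l => ?_
    have h := T_aux k l []
    simp only [prep_nil _ (segments_ne_nil _ _), List.nil_append] at h
    rw [Tmap, onBasis_word, h]
    simp [Rm, Delta, onBasis_word]
  exact LinearMap.congr_fun this u

theorem Rm_bv (k : Type) [CommRing k] (p u : AB k) :
    Rm k p (bv k * u) = nuMap k p * bv k * Tmap k u + Rm k (p * bv k) u := by
  simp only [Rm, LinearMap.comp_apply]
  rw [bv, Delta_cons, map_add, ← LinearMap.comp_apply (TensorProduct.map _ _) (TensorProduct.map _ _),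
    ← TensorProduct.map_comp]
  simp [LinearMap.mulLeft_mul, LinearMap.comp_assoc]

theorem Rm_ev (k : Type) [CommRing k] (p u : AB k) :
    Rm k p (ev k * u) = Rm k (p * ev k) u := by
  simp only [Rm, LinearMap.comp_apply]
  rw [Delta_ev, ← LinearMap.comp_apply (TensorProduct.map _ _) (TensorProduct.map _ _),
    ← TensorProduct.map_comp]
  simp [LinearMap.mulLeft_mul, LinearMap.comp_assoc]

theorem Rm_one (k : Type) [CommRing k] (p : AB k) : Rm k p 1 = 0 := by
  simp [Rm, Delta_one]

/-! Words in `e = a - b` and `b` -/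

/-- words in `e` and `b` -/
def eb (k : Type) [CommRing k] : List Bool → AB k
  | [] => 1
  | true :: l => ev k * eb k l
  | false :: l => bv k * eb k l

theorem mul_word_homog (k : Type) [Field k] (x : Bool) (n : ℕ) (u : AB k)
    (hu : u ∈ ABhomog k n) : word k [x] * u ∈ ABhomog k (n + 1) := by
  induction hu using Submodule.span_induction with
  | mem y hy =>
    obtain ⟨w, hw, rfl⟩ := hy
    rw [← word_cons]
    exact Submodule.subset_span ⟨_, by simp [hw], rfl⟩
  | zero => simp
  | add y z _ _ hy hz => rw [mul_add]; exact add_mem hy hz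
  | smul c y _ hy => rw [mul_smul_comm]; exact Submodule.smul_mem _ _ hy

theorem word_mul_homog (k : Type) [Field k] (x : Bool) (n : ℕ) (u : AB k)
    (hu : u ∈ ABhomog k n) : u * word k [x] ∈ ABhomog k (n + 1) := by
  induction hu using Submodule.span_induction with
  | mem y hy =>
    obtain ⟨w, hw, rfl⟩ := hy
    rw [← word_append]
    exact Submodule.subset_span ⟨_, by simp [hw], rfl⟩
  | zero => simp
  | add y z _ _ hy hz => rw [add_mul]; exact add_mem hy hz
  | smul c y _ hy => rw [smul_mul_assoc]; exact Submodule.smul_mem _ _ hy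

theorem mul_ev_homog (k : Type) [Field k] (n : ℕ) (u : AB k)
    (hu : u ∈ ABhomog k n) : u * ev k ∈ ABhomog k (n + 1) := by
  rw [ev, mul_sub]
  exact sub_mem (word_mul_homog k true n u hu) (word_mul_homog k false n u hu)

theorem one_homog (k : Type) [Field k] : (1 : AB k) ∈ ABhomog k 0 :=
  Submodule.subset_span ⟨[], rfl, (word_nil k).symm⟩

theorem ev_pow_homog (k : Type) [Field k] (n : ℕ) : ev k ^ n ∈ ABhomog k n := by
  induction n with
  | zero => simpa using one_homog k
  | succ n ih => rw [pow_succ]; exact mul_ev_homog k n _ ih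

theorem eb_homog (k : Type) [Field k] (l : List Bool) : eb k l ∈ ABhomog k l.length := by
  induction l with
  | nil => exact one_homog k
  | cons x l ih =>
    cases x
    · exact mul_word_homog k false _ _ ih
    · simp only [eb, ev, sub_mul, List.length_cons]
      exact sub_mem (mul_word_homog k true _ _ ih) (mul_word_homog k false _ _ ih)

theorem nu_homog (k : Type) [Field k] (n : ℕ) (u : AB k) (hu : u ∈ ABhomog k n) :
    nuMap k u = Cmap k u • ev k ^ n := by
  induction hu using Submodule.span_induction with
  | mem y hy =>
    obtain ⟨w, hw, rfl⟩ := hy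
    rw [nuMap, onBasis_word, hw]
  | zero => simp
  | add y z _ _ hy hz => simp [hy, hz, add_smul]
  | smul c y _ hy => simp [hy, mul_smul]

theorem A_word (k : Type) [CommRing k] (x : Bool) :
    Amap k (word k [x]) = if x then 1 else 0 := by
  simp [Amap, word]

theorem A_ev (k : Type) [CommRing k] : Amap k (ev k) = 1 := by
  simp [ev, av, bv, A_word]

theorem Delta_ev_pow (k : Type) [CommRing k] (n : ℕ) : Delta k (ev k ^ n) = 0 := by
  induction n with
  | zero => simp [Delta_one]
  | succ n ih => rw [pow_succ', Delta_ev, ih, map_zero]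

theorem nu_ev_pow (k : Type) [Field k] (n : ℕ) : nuMap k (ev k ^ n) = (2 : k) • ev k ^ n := by
  rw [nu_homog k n _ (ev_pow_homog k n)]
  simp [Cmap, Delta_ev_pow, A_ev]

theorem kappa_bv (k : Type) [CommRing k] (u : AB k) : kappa k (u * bv k) = 0 := by
  have : kappa k ∘ₗ LinearMap.mulRight k (bv k) = 0 := by
    refine ext_word k fun l => ?_
    simp only [LinearMap.comp_apply, LinearMap.mulRight_apply, bv, ← word_append]
    rw [kappa, onBasis_word, word_append, map_mul, A_word]
    simp
  exact LinearMap.congr_fun this u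

theorem kappa_av (k : Type) [CommRing k] (u : AB k) : kappa k (u * av k) = kappa k u * ev k := by
  have : kappa k ∘ₗ LinearMap.mulRight k (av k) = LinearMap.mulRight k (ev k) ∘ₗ kappa k := by
    refine ext_word k fun l => ?_
    simp only [LinearMap.comp_apply, LinearMap.mulRight_apply, av, ← word_append]
    rw [kappa, onBasis_word, onBasis_word, word_append, map_mul, A_word]
    simp [pow_succ]
  exact LinearMap.congr_fun this u

theorem kappa_ev (k : Type) [CommRing k] (u : AB k) : kappa k (u * ev k) = kappa k u * ev k := by
  rw [ev, mul_sub, map_sub, kappa_av, kappa_bv, sub_zero, ← ev]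

theorem kappa_one (k : Type) [CommRing k] : kappa k 1 = 1 := by
  rw [← word_nil, kappa, onBasis_word, word_nil]; simp

theorem T_one (k : Type) [CommRing k] : Tmap k 1 = 1 := by
  rw [T_eq, Rm_one, kappa_one, add_zero]

theorem Hstar_word (k : Type) [CommRing k] (x : Bool) (u : AB k) :
    Hstar k (u * word k [x]) = u := by
  have : Hstar k ∘ₗ LinearMap.mulRight k (word k [x]) = LinearMap.id := by
    refine ext_word k fun l => ?_
    simp only [LinearMap.comp_apply, LinearMap.mulRight_apply, ← word_append]
    rw [Hstar, onBasis_word]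
    simp
  exact LinearMap.congr_fun this u

theorem Hstar_ev (k : Type) [CommRing k] (u : AB k) : Hstar k (u * ev k) = 0 := by
  rw [ev, mul_sub, map_sub, av, bv, Hstar_word, Hstar_word, sub_self]

theorem Rm_eb_ev (k : Type) [CommRing k] (l : List Bool) :
    ∀ p : AB k, ∃ y, Rm k p (eb k l * ev k) = y * ev k := by
  induction l with
  | nil =>
    intro p
    refine ⟨0, ?_⟩
    have := Rm_ev k p 1
    rw [mul_one, Rm_one] at this
    rw [eb, one_mul, this, zero_mul]
  | cons x l ih =>
    intro p
    cases x
    · obtain ⟨y, hy⟩ := ih (p * bv k)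
      obtain ⟨z, hz⟩ := ih 1
      refine ⟨nuMap k p * bv k * (kappa k (eb k l) + z) + y, ?_⟩
      rw [eb, mul_assoc, Rm_bv, hy, T_eq, hz, kappa_ev]
      noncomm_ring
    · obtain ⟨y, hy⟩ := ih (p * ev k)
      exact ⟨y, by rw [eb, mul_assoc, Rm_ev, hy]⟩

/-- span of the `eb`-words of length `n` with fewer than `r` letters `b` -/
def LL (k : Type) [CommRing k] (n r : ℕ) : Submodule k (AB k) :=
  Submodule.span k {x | ∃ m : List Bool, m.length = n ∧ m.count false < r ∧ x = eb k m}

theorem LL_mono (k : Type) [CommRing k] {n r s : ℕ} (h : r ≤ s) : LL k n r ≤ LL k n s :=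
  Submodule.span_mono fun _ ⟨m, h1, h2, h3⟩ => ⟨m, h1, h2.trans_le h, h3⟩

theorem bv_LL (k : Type) [CommRing k] {n r : ℕ} {u : AB k} (hu : u ∈ LL k n r) :
    bv k * u ∈ LL k (n + 1) (r + 1) := by
  induction hu using Submodule.span_induction with
  | mem y hy =>
    obtain ⟨w, h1, h2, rfl⟩ := hy
    exact Submodule.subset_span ⟨false :: w, by simp [h1], by simp [h2], rfl⟩
  | zero => simp
  | add y z _ _ hy hz => rw [mul_add]; exact add_mem hy hz
  | smul c y _ hy => rw [mul_smul_comm]; exact Submodule.smul_mem _ _ hy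

theorem ev_LL (k : Type) [CommRing k] {n r : ℕ} {u : AB k} (hu : u ∈ LL k n r) :
    ev k * u ∈ LL k (n + 1) r := by
  induction hu using Submodule.span_induction with
  | mem y hy =>
    obtain ⟨w, h1, h2, rfl⟩ := hy
    exact Submodule.subset_span ⟨true :: w, by simp [h1], by simpa using h2, rfl⟩
  | zero => simp
  | add y z _ _ hy hz => rw [mul_add]; exact add_mem hy hz
  | smul c y _ hy => rw [mul_smul_comm]; exact Submodule.smul_mem _ _ hy

theorem ev_pow_LL (k : Type) [CommRing k] {n r : ℕ} {u : AB k} (hu : u ∈ LL k n r) (j : ℕ) :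
    ev k ^ j * u ∈ LL k (j + n) r := by
  induction j with
  | zero => simpa using hu
  | succ j ih =>
    rw [pow_succ', mul_assoc, show j + 1 + n = j + n + 1 by omega]
    exact ev_LL k ih

theorem Rm_upper (k : Type) [Field k] (l : List Bool) : ∀ (j : ℕ) (p : AB k), p ∈ ABhomog k j →
    ∃ y ∈ LL k (j + l.length) (l.count false + 1), Rm k p (eb k l * bv k) = y * bv k := by
  induction l with
  | nil =>
    intro j p hp
    have h1 : (1 : AB k) ∈ LL k 0 1 := Submodule.subset_span ⟨[], rfl, by simp, rfl⟩
    refine ⟨Cmap k p • (ev k ^ j * 1), Submodule.smul_mem _ _ (ev_pow_LL k h1 j), ?_⟩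
    have h := Rm_bv k p 1
    rw [eb, one_mul]
    rw [mul_one, T_one, Rm_one, nu_homog k j p hp] at h
    rw [h]; simp
  | cons x l ih =>
    intro j p hp
    cases x
    · obtain ⟨y, hy, hy2⟩ := ih (j + 1) (p * bv k) (word_mul_homog k false j p hp)
      obtain ⟨z, hz, hz2⟩ := ih 0 1 (one_homog k)
      rw [zero_add] at hz
      refine ⟨Cmap k p • (ev k ^ j * (bv k * z)) + y, add_mem (Submodule.smul_mem _ _ ?_) ?_, ?_⟩
      · simpa using ev_pow_LL k (bv_LL k hz) j
      · have := LL_mono k (show l.count false + 1 ≤ (false :: l).count false + 1 by simp) hy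
        rwa [show j + 1 + l.length = j + (false :: l).length by simp; omega] at this
      · rw [eb, mul_assoc, Rm_bv, hy2, T_eq, hz2, kappa_bv, nu_homog k j p hp, zero_add, add_mul]
        simp [mul_assoc]
    · obtain ⟨y, hy, hy2⟩ := ih (j + 1) (p * ev k) (mul_ev_homog k j p hp)
      refine ⟨y, ?_, by rw [eb, mul_assoc, Rm_ev, hy2]⟩
      rw [show j + 1 + l.length = j + (true :: l).length by simp; omega] at hy
      simpa using hy

theorem Rm_lead (k : Type) [Field k] (l : List Bool) : ∀ j : ℕ,
    ∃ y ∈ LL k (j + l.length) (l.count false), Rm k (ev k ^ j) (eb k l * bv k) =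
      (2 : k) ^ (l.count false + 1) • (ev k ^ j * eb k l * bv k) + y * bv k := by
  induction l with
  | nil =>
    intro j
    refine ⟨0, zero_mem _, ?_⟩
    have h := Rm_bv k (ev k ^ j) 1
    rw [eb, one_mul]
    rw [mul_one, T_one, Rm_one, nu_ev_pow] at h
    rw [h]; simp
  | cons x l ih =>
    intro j
    cases x
    · obtain ⟨y, hy, hy2⟩ := Rm_upper k l (j + 1) (ev k ^ j * bv k)
        (word_mul_homog k false j _ (ev_pow_homog k j))
      obtain ⟨z, hz, hz2⟩ := ih 0
      rw [zero_add] at hz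
      rw [pow_zero] at hz2
      refine ⟨(2 : k) • (ev k ^ j * (bv k * z)) + y, add_mem (Submodule.smul_mem _ _ ?_) ?_, ?_⟩
      · simpa using ev_pow_LL k (bv_LL k hz) j
      · rw [show j + 1 + l.length = j + (false :: l).length by simp; omega] at hy
        simpa using hy
      · rw [eb, mul_assoc, Rm_bv, hy2, T_eq, hz2, kappa_bv, nu_ev_pow, zero_add, add_mul,
          List.count_cons_self, pow_succ _ (l.count false + 1)]
        simp only [mul_assoc, mul_add, smul_mul_assoc, mul_smul_comm, smul_smul, one_mul,
          add_assoc]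
    · obtain ⟨y, hy, hy2⟩ := ih (j + 1)
      refine ⟨y, ?_, ?_⟩
      · rw [show j + 1 + l.length = j + (true :: l).length by simp; omega] at hy
        simpa using hy
      · rw [eb, mul_assoc, Rm_ev, ← pow_succ, hy2, pow_succ (ev k)]
        simp only [mul_assoc, List.count_cons_of_ne (show true ≠ false by decide)]

theorem U_eb (k : Type) [Field k] (l : List Bool) :
    Umap k (eb k l) - (2 : k) ^ (l.count false + 1) • eb k l ∈ LL k l.length (l.count false) := by
  obtain ⟨y, hy, hy2⟩ := Rm_lead k l 0
  obtain ⟨z, hz⟩ := Rm_eb_ev k l 1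
  have ha : av k = ev k + bv k := by simp [ev]
  rw [pow_zero] at hy2
  have : Umap k (eb k l) = (2 : k) ^ (l.count false + 1) • eb k l + y := by
    simp only [Umap, LinearMap.comp_apply, LinearMap.mulRight_apply]
    rw [ha, mul_add, map_add, T_eq, T_eq, hz, hy2, kappa_ev, kappa_bv, one_mul]
    simp only [map_add, Hstar_ev, map_smul, zero_add, bv, Hstar_word]
  rw [this, add_sub_cancel_left]
  simpa using hy

/-! Linear algebra -/

theorem surj_aux {k V ι : Type} [Field k] [AddCommGroup V] [Module k V] (f : V →ₗ[k] V)
    (w : ι → V) (h : ι → ℕ) (lam : ℕ → k)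
    (hf : ∀ i, f (w i) - lam (h i) • w i ∈ Submodule.span k (w '' {j | h j < h i})) (r : ℕ) :
    ∀ μ : k, (∀ j < r, lam j ≠ μ) → ∀ y ∈ Submodule.span k (w '' {j | h j < r}),
      ∃ z ∈ Submodule.span k (w '' {j | h j < r}), f z - μ • z = y := by
  induction r with
  | zero =>
    intro μ _ y hy
    refine ⟨0, zero_mem _, ?_⟩
    simp at hy
    simp [hy]
  | succ r ih =>
    intro μ hμ y hy
    have mono : Submodule.span k (w '' {j | h j < r}) ≤ Submodule.span k (w '' {j | h j < r + 1}) :=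
      Submodule.span_mono (Set.image_mono fun j (hj : h j < r) => Nat.lt_succ_of_lt hj)
    induction hy using Submodule.span_induction with
    | mem y hy =>
      obtain ⟨i, hi, rfl⟩ := hy
      have ih' := ih μ (fun j hj => hμ j (by omega))
      rcases Nat.lt_succ_iff_lt_or_eq.1 hi with hi' | hi'
      · obtain ⟨z, hz, hz2⟩ := ih' (w i) (Submodule.subset_span ⟨i, hi', rfl⟩)
        exact ⟨z, mono hz, hz2⟩
      · have hfi := hf i
        rw [hi'] at hfi
        obtain ⟨z, hz, hz2⟩ := ih' _ hfi
        have hne : lam r - μ ≠ 0 := sub_ne_zero.2 (hμ r (by omega))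
        refine ⟨(lam r - μ)⁻¹ • (w i - z), Submodule.smul_mem _ _
          (sub_mem (Submodule.subset_span ⟨i, hi, rfl⟩) (mono hz)), ?_⟩
        have key : f (w i - z) - μ • (w i - z) = (lam r - μ) • w i := by
          rw [map_sub, smul_sub, sub_smul]
          have : f (w i) - f z - (μ • w i - μ • z) = (f (w i) - μ • w i) - (f z - μ • z) := by abel
          rw [this, hz2]; abel
        rw [map_smul, smul_comm μ, ← smul_sub, key, smul_smul, inv_mul_cancel₀ hne, one_smul]
    | zero => exact ⟨0, zero_mem _, by simp⟩
    | add y z _ _ hy hz =>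
      obtain ⟨a, ha, rfl⟩ := hy
      obtain ⟨b, hb, rfl⟩ := hz
      exact ⟨a + b, add_mem ha hb, by rw [map_add, smul_add]; abel⟩
    | smul c y _ hy =>
      obtain ⟨a, ha, rfl⟩ := hy
      exact ⟨c • a, Submodule.smul_mem _ _ ha, by rw [map_smul, smul_sub, smul_comm μ]⟩

theorem exists_eigen {k V ι : Type} [Field k] [AddCommGroup V] [Module k V] (f : V →ₗ[k] V)
    (w : ι → V) (h : ι → ℕ) (lam : ℕ → k) (hlam : Function.Injective lam)
    (hf : ∀ i, f (w i) - lam (h i) • w i ∈ Submodule.span k (w '' {j | h j < h i})) :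
    ∃ v : ι → V, (∀ i, f (v i) = lam (h i) • v i) ∧
      Submodule.span k (Set.range v) = Submodule.span k (Set.range w) := by
  have hex : ∀ i, ∃ z ∈ Submodule.span k (w '' {j | h j < h i}),
      f z - lam (h i) • z = f (w i) - lam (h i) • w i := fun i =>
    surj_aux f w h lam hf (h i) (lam (h i)) (fun j hj e => hj.ne (hlam e)) _ (hf i)
  choose z hz hz2 using hex
  refine ⟨fun i => w i - z i, fun i => ?_, le_antisymm ?_ ?_⟩
  · have := hz2 i
    rw [map_sub, smul_sub, ← sub_eq_zero]
    rw [← sub_eq_zero] at this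
    rw [← neg_eq_zero, ← this]; abel
  · rw [Submodule.span_le]
    rintro _ ⟨i, rfl⟩
    exact sub_mem (Submodule.subset_span ⟨i, rfl⟩)
      (Submodule.span_mono (Set.image_subset_range _ _) (hz i))
  · have key : ∀ r i, h i < r → w i ∈ Submodule.span k (Set.range fun i => w i - z i) := by
      intro r
      induction r with
      | zero => intro i hi; omega
      | succ r ih =>
        intro i hi
        have h1 : z i ∈ Submodule.span k (Set.range fun i => w i - z i) := by
          refine Submodule.span_le.2 ?_ (hz i)
          rintro _ ⟨j, hj, rfl⟩
          have hj : h j < h i := hj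
          exact ih j (by omega)
        have h2 : w i - z i ∈ Submodule.span k (Set.range fun i => w i - z i) :=
          Submodule.subset_span ⟨i, rfl⟩
        simpa using add_mem h2 h1
    rw [Submodule.span_le]
    rintro _ ⟨i, rfl⟩
    exact key _ i (Nat.lt_succ_self _)

/-- word of a set: letter `b` (false) at positions in `S` -/
def lst (n : ℕ) (S : Finset (Fin n)) : List Bool := List.ofFn fun i => decide (i ∉ S)

theorem lst_length (n : ℕ) (S : Finset (Fin n)) : (lst n S).length = n := by simp [lst]

theorem lst_count (n : ℕ) (S : Finset (Fin n)) : (lst n S).count false = S.card := by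
  rw [lst, List.count, List.countP_eq_length_filter, List.ofFn_eq_map, List.filter_map,
    List.length_map, ← List.toFinset_card_of_nodup ((List.nodup_finRange n).filter _)]
  congr 1
  ext i
  simp

theorem lst_injective (n : ℕ) : Function.Injective (lst n) := by
  intro S T h
  have := List.ofFn_injective h
  ext i
  have := congrFun this i
  simpa using this

theorem lst_surj (n : ℕ) (l : List Bool) (hl : l.length = n) : ∃ S, lst n S = l := by
  subst hl
  refine ⟨Finset.univ.filter fun i => l[i] = false, ?_⟩
  apply List.ext_getElem
  · simp [lst]
  · intro i h1 h2
    simp [lst]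

theorem word_mem_span_eb (k : Type) [Field k] (l : List Bool) :
    word k l ∈ LL k l.length (l.length + 1) := by
  induction l with
  | nil => exact Submodule.subset_span ⟨[], rfl, by simp, word_nil k⟩
  | cons x l ih =>
    have hb := bv_LL k ih
    have he := LL_mono k (Nat.le_succ _) (ev_LL k ih)
    rw [word_cons]
    cases x
    · exact hb
    · have : word k [true] = ev k + bv k := by simp [ev, av]
      rw [this, add_mul]
      exact add_mem he hb

theorem LL_eq (k : Type) [Field k] (n r : ℕ) :
    LL k n r = Submodule.span k ((fun S => eb k (lst n S)) '' {S | S.card < r}) := by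
  unfold LL
  congr 1
  ext x
  constructor
  · rintro ⟨m, h1, h2, rfl⟩
    obtain ⟨S, rfl⟩ := lst_surj n m h1
    exact ⟨S, by simpa [lst_count] using h2, rfl⟩
  · rintro ⟨S, hS, rfl⟩
    exact ⟨lst n S, lst_length n S, by simpa [lst_count] using hS, rfl⟩

theorem span_eb (k : Type) [Field k] (n : ℕ) :
    Submodule.span k (Set.range fun S => eb k (lst n S)) = ABhomog k n := by
  apply le_antisymm
  · rw [Submodule.span_le]
    rintro _ ⟨S, rfl⟩
    have := eb_homog k (lst n S)
    rwa [lst_length] at this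
  · rw [ABhomog, Submodule.span_le]
    rintro _ ⟨l, rfl, rfl⟩
    have := word_mem_span_eb k l
    rw [LL_eq] at this
    exact Submodule.span_mono (Set.image_subset_range _ _) this

theorem finrank_homog (k : Type) [Field k] (n : ℕ) :
    Module.finrank k (ABhomog k n) = Fintype.card (Finset (Fin n)) := by
  have hli : LinearIndependent k (fun S => word k (lst n S)) := by
    have h1 := (MonoidAlgebra.basis ABWord k).linearIndependent
    have h2 := h1.comp (fun S => FreeMonoid.ofList (lst n S))
      (FreeMonoid.ofList.injective.comp (lst_injective n))
    have h3 : (fun S => word k (lst n S)) = (MonoidAlgebra.basis ABWord k) ∘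
        fun S => FreeMonoid.ofList (lst n S) := by
      funext S
      simp [word, MonoidAlgebra.basis_apply]
    rw [h3]
    exact h2
  suffices hs : {x : AB k | ∃ w : List Bool, w.length = n ∧ x = word k w} =
      Set.range (fun S => word k (lst n S)) by
    rw [← finrank_span_eq_card hli, ABhomog, hs]
  ext x
  constructor
  · rintro ⟨l, h1, rfl⟩
    obtain ⟨S, rfl⟩ := lst_surj n l h1
    exact ⟨S, rfl⟩
  · rintro ⟨S, rfl⟩
    exact ⟨_, lst_length n S, rfl⟩

end Helpers

theorem U_spectrum (k : Type) [Field k] [CharZero k] (n : ℕ) :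
    ∃ bas : Module.Basis (Finset (Fin n)) k (ABhomog k n),
      ∀ S : Finset (Fin n),
        Umap k ((bas S : AB k)) = ((2 : k) ^ (S.card + 1)) • (bas S : AB k) := by
  have hlam : Function.Injective fun r : ℕ => (2 : k) ^ (r + 1) := by
    intro r s h
    have h' : ((2 ^ (r + 1) : ℕ) : k) = ((2 ^ (s + 1) : ℕ) : k) := by push_cast; exact h
    have := Nat.pow_right_injective le_rfl (Nat.cast_injective h')
    omega
  obtain ⟨v, hv, hspan⟩ := exists_eigen (Umap k) (fun S : Finset (Fin n) => eb k (lst n S))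
    (fun S => S.card) (fun r => (2 : k) ^ (r + 1)) hlam (fun S => by
      have := U_eb k (lst n S)
      rwa [lst_count, lst_length, LL_eq] at this)
  rw [span_eb] at hspan
  have hli : LinearIndependent k v := by
    rw [linearIndependent_iff_card_eq_finrank_span, Set.finrank, hspan, finrank_homog]
  refine ⟨(Module.Basis.span hli).map (LinearEquiv.ofEq _ _ hspan), fun S => ?_⟩
  have : ((((Module.Basis.span hli).map (LinearEquiv.ofEq _ _ hspan)) S : ABhomog k n) : AB k)
      = v S := by
    simp [Module.Basis.span_apply]
  rw [this]
  exact hv S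

end Tcheb
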